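/- For every real number x ≥ 190, one has Li(x) > x/log x + x/(log x)² + 2x/(log x)³ + 6x/(log x)⁴. -/

import Mathlib

/-- `Li(x) = ∫₂ˣ dt / log t`, the logarithmic integral. -/
noncomputable def Li (x : ℝ) : ℝ := ∫ t in (2 : ℝ)..x, 1 / Real.log t

/-!
The bound consists of the first four terms of the asymptotic expansion `∑ k! x / (log x) ^ (k + 1)`
of `Li x`. The derivative of the sum of the first `n` terms telescopes to
`1 / log x - n! / (log x) ^ (n + 1)`, so `Li` minus that sum is increasing on `(1, ∞)` and it
suffices to treat `x = 190`. There the margin is about `0.0037`, and it survives truncating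
`Li (exp u) = log u + ∑ u ^ (k + 1) / ((k + 1) (k + 1)!) + const` after 18 terms: truncation only
decreases the derivative, so differences of the truncated sum bound differences of `Li` from below.
-/

open Real
open scoped Nat

theorem Li_two : Li 2 = 0 :=
  intervalIntegral.integral_same

theorem hasDerivAt_Li {x : ℝ} (hx : 1 < x) : HasDerivAt Li (1 / log x) x := by
  have hcont : ContinuousOn (fun t => 1 / log t) (Set.Ioi 1) := fun t ht =>
    (continuousAt_const.div (continuousAt_log (zero_lt_one.trans ht).ne')
      (log_pos ht).ne').continuousWithinAt
  exact intervalIntegral.integral_hasDerivAt_right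
    (hcont.mono fun t ht => (lt_min one_lt_two hx).trans_le ht.1).intervalIntegrable
    (hcont.stronglyMeasurableAtFilter isOpen_Ioi x hx) (hcont.continuousAt (Ioi_mem_nhds hx))

theorem monotoneOn_Li_sub {g g' : ℝ → ℝ} (hg : ∀ t, 1 < t → HasDerivAt g (g' t) t)
    (hg' : ∀ t, 1 < t → g' t ≤ 1 / log t) : MonotoneOn (fun t => Li t - g t) (Set.Ioi 1) := by
  have hderiv : ∀ t, 1 < t → HasDerivAt (fun t => Li t - g t) (1 / log t - g' t) t :=
    fun t ht => (hasDerivAt_Li ht).sub (hg t ht)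
  exact monotoneOn_of_hasDerivWithinAt_nonneg (convex_Ioi 1)
    (fun t ht => (hderiv t ht).continuousAt.continuousWithinAt)
    (fun t ht => (hderiv t (interior_subset ht)).hasDerivWithinAt)
    fun t ht => sub_nonneg.2 (hg' t (interior_subset ht))

/-- The sum of the first `n` terms of the asymptotic expansion of `Li x` as `x → ∞`, obtained by
integrating `∫ 1 / log x` by parts `n` times. -/
noncomputable def liAsymptoticSum (n : ℕ) (x : ℝ) : ℝ :=
  ∑ k ∈ Finset.range n, k ! * (x / log x ^ (k + 1))

theorem hasDerivAt_div_log_pow (k : ℕ) {x : ℝ} (hlog : log x ≠ 0) :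
    HasDerivAt (fun x => x / log x ^ k) (1 / log x ^ k - k / log x ^ (k + 1)) x := by
  have hx₀ : x ≠ 0 := (log_ne_zero.1 hlog).1
  convert! (hasDerivAt_id' x).div ((hasDerivAt_log hx₀).fun_pow k) (pow_ne_zero k hlog) using 1
  cases k with
  | zero => simp
  | succ k =>
    rw [Nat.add_sub_cancel]
    push_cast
    field_simp
    ring

theorem hasDerivAt_liAsymptoticSum (n : ℕ) {x : ℝ} (hlog : log x ≠ 0) :
    HasDerivAt (liAsymptoticSum n) (1 / log x - n ! / log x ^ (n + 1)) x := by
  convert! HasDerivAt.fun_sum (u := Finset.range n) fun k _ =>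
    (hasDerivAt_div_log_pow (k + 1) hlog).const_mul (k ! : ℝ) using 1
  calc 1 / log x - n ! / log x ^ (n + 1)
      = ∑ k ∈ Finset.range n, ((k ! : ℝ) / log x ^ (k + 1) - (k + 1)! / log x ^ (k + 1 + 1)) := by
        rw [Finset.sum_range_sub' fun k : ℕ => (k ! : ℝ) / log x ^ (k + 1)]
        simp
    _ = ∑ k ∈ Finset.range n,
          (k ! : ℝ) * (1 / log x ^ (k + 1) - (k + 1 : ℕ) / log x ^ (k + 1 + 1)) := by
        refine Finset.sum_congr rfl fun k _ => ?_
        rw [Nat.factorial_succ]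
        push_cast
        ring

theorem monotoneOn_Li_sub_liAsymptoticSum (n : ℕ) :
    MonotoneOn (fun x => Li x - liAsymptoticSum n x) (Set.Ioi 1) :=
  monotoneOn_Li_sub (fun _ ht => hasDerivAt_liAsymptoticSum n (log_pos ht).ne') fun _ ht =>
    sub_le_self _ (div_nonneg (Nat.cast_nonneg _) (pow_nonneg (log_pos ht).le _))

/-- The truncation of the series `log u + ∑ u ^ k / (k * k!)`, `k ≥ 1`, after `n` terms of the sum.
The full series is an antiderivative of `exp u / u`, the integrand of `Li` after substituting
`u = log x`. -/
noncomputable def expIntegralPartialSum (n : ℕ) (u : ℝ) : ℝ :=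
  log u + ∑ k ∈ Finset.range n, u ^ (k + 1) / ((k + 1) * (k + 1)!)

theorem hasDerivAt_expIntegralPartialSum (n : ℕ) {u : ℝ} (hu : u ≠ 0) :
    HasDerivAt (expIntegralPartialSum n) ((∑ k ∈ Finset.range (n + 1), u ^ k / k !) / u) u := by
  convert! (hasDerivAt_log hu).add (HasDerivAt.fun_sum (u := Finset.range n) fun k _ =>
    (hasDerivAt_pow (k + 1) u).div_const (((k : ℝ) + 1) * (k + 1)!)) using 1
  rw [Finset.sum_range_succ', add_div, Finset.sum_div, add_comm]
  congr 1
  · simp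
  · refine Finset.sum_congr rfl fun k _ => ?_
    have hk : (k : ℝ) + 1 ≠ 0 := by positivity
    rw [Nat.add_sub_cancel]
    push_cast
    field_simp
    ring

theorem monotoneOn_Li_sub_expIntegralPartialSum_log (n : ℕ) :
    MonotoneOn (fun x => Li x - expIntegralPartialSum n (log x)) (Set.Ioi 1) := by
  refine monotoneOn_Li_sub (fun t ht => (hasDerivAt_expIntegralPartialSum n
    (log_pos ht).ne').comp t (hasDerivAt_log (zero_lt_one.trans ht).ne')) fun t ht => ?_
  have ht₀ : 0 < t := zero_lt_one.trans ht
  have hlog : 0 < log t := log_pos ht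
  calc (∑ k ∈ Finset.range (n + 1), log t ^ k / k !) / log t * t⁻¹
      ≤ exp (log t) / log t * t⁻¹ := by
        gcongr
        exact sum_le_exp_of_nonneg hlog.le (n + 1)
    _ = 1 / log t := by
        rw [exp_log ht₀]
        field_simp

theorem log_190_gt : 5.247 < log 190 := by
  -- `190 ^ 2 = 36100` is close to `36000`, whose prime factors have known logarithms.
  have hsq : 2 * log 190 = 5 * log 2 + 2 * log 3 + 3 * log 5 + log (361 / 360) := by
    calc 2 * log 190 = log (190 ^ 2) := by simp only [log_pow, Nat.cast_ofNat]
      _ = log (2 ^ 5 * 3 ^ 2 * 5 ^ 3 * (361 / 360)) := by norm_num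
      _ = 5 * log 2 + 2 * log 3 + 3 * log 5 + log (361 / 360) := by
        rw [log_mul (by norm_num) (by norm_num), log_mul (by norm_num) (by norm_num),
          log_mul (by norm_num) (by norm_num)]
        simp only [log_pow, Nat.cast_ofNat]
  have hratio : 1 - (361 / 360 : ℝ)⁻¹ ≤ log (361 / 360) := one_sub_inv_le_log_of_pos (by norm_num)
  norm_num at hratio
  linarith [log_two_gt_d9, log_three_gt_d9, log_five_gt_d9]

theorem log_log_190_sub_log_log_two_gt : 2.024 < log (log 190) - log (log 2) := by
  have hlog₂ : 0 < log 2 := log_pos one_lt_two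
  have hlog : 0 < log 190 := log_pos (by norm_num)
  -- `15 / 2` approximates `log 190 / log 2 ≈ 7.57`.
  have hratio : 1 - 15 / 2 * log 2 / log 190 ≤ log (log 190) - log (log 2) - log (15 / 2) := by
    have h := one_sub_inv_le_log_of_pos (x := log 190 / (15 / 2 * log 2)) (by positivity)
    rwa [inv_div, log_div hlog.ne' (by positivity), log_mul (by norm_num) hlog₂.ne',
      sub_add_eq_sub_sub_swap] at h
  have hquot : 15 / 2 * log 2 / log 190 ≤ 0.9908 := by
    rw [div_le_iff₀ hlog]
    linarith [log_190_gt, log_two_lt_d9]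
  have hc : log (15 / 2) = log 3 + log 5 - log 2 := by
    rw [← log_mul (by norm_num) (by norm_num), ← log_div (by norm_num) (by norm_num)]
    norm_num
  linarith [log_two_lt_d9, log_three_gt_d9, log_five_gt_d9]

theorem liAsymptoticSum_four_190_lt :
    liAsymptoticSum 4 190
      < expIntegralPartialSum 18 (log 190) - expIntegralPartialSum 18 (log 2) := by
  have hlog : 5.247 ≤ log 190 := log_190_gt.le
  have hlog₂ : log 2 ≤ 0.6931471808 := log_two_lt_d9.le
  calc liAsymptoticSum 4 190
      ≤ ∑ k ∈ Finset.range 4, (k ! : ℝ) * (190 / 5.247 ^ (k + 1)) := by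
        unfold liAsymptoticSum
        gcongr
    _ < 2.024 + ∑ k ∈ Finset.range 18, (5.247 : ℝ) ^ (k + 1) / ((k + 1) * (k + 1)!)
          - ∑ k ∈ Finset.range 18, (0.6931471808 : ℝ) ^ (k + 1) / ((k + 1) * (k + 1)!) := by
        norm_num [Finset.sum_range_succ, Nat.factorial]
    _ ≤ (log (log 190) - log (log 2))
          + ∑ k ∈ Finset.range 18, log 190 ^ (k + 1) / ((k + 1) * (k + 1)!)
          - ∑ k ∈ Finset.range 18, log 2 ^ (k + 1) / ((k + 1) * (k + 1)!) := by
        gcongr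
        exact log_log_190_sub_log_log_two_gt.le
    _ = expIntegralPartialSum 18 (log 190) - expIntegralPartialSum 18 (log 2) := by
        unfold expIntegralPartialSum
        ring

theorem Li_lower_bound (x : ℝ) (hx : 190 ≤ x) :
    x / Real.log x + x / Real.log x ^ 2 + 2 * x / Real.log x ^ 3 + 6 * x / Real.log x ^ 4
      < Li x := by
  have hsum : liAsymptoticSum 4 x =
      x / log x + x / log x ^ 2 + 2 * x / log x ^ 3 + 6 * x / log x ^ 4 := by
    simp [liAsymptoticSum, Finset.sum_range_succ, Nat.factorial, mul_div_assoc]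
  have hbase : liAsymptoticSum 4 190 < Li 190 := by
    have hmono := monotoneOn_Li_sub_expIntegralPartialSum_log 18
      (Set.mem_Ioi.2 one_lt_two) (Set.mem_Ioi.2 (by norm_num : (1 : ℝ) < 190)) (by norm_num)
    simp only [Li_two] at hmono
    linarith [liAsymptoticSum_four_190_lt]
  have htail : Li 190 - liAsymptoticSum 4 190 ≤ Li x - liAsymptoticSum 4 x :=
    monotoneOn_Li_sub_liAsymptoticSum 4 (Set.mem_Ioi.2 (by norm_num))
      (Set.mem_Ioi.2 (by linarith)) hx
  rw [← hsum]
  linarith
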